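/- arXiv:1907.05455 — 2 statements merged into one kernel-verified Lean document; each statement's English description precedes it below -/
import Mathlib

section
/- Let N ≥ 2. There exists no holomorphic function f on 𝔹_N with the property that for every continuous function h : b𝔹_N → ℂ there is a sequence (r_j) ⊆ [0,1) with r_j → 1 such that f(r_j x) → h(x) for every x ∈ b𝔹_N. More precisely, for any f ∈ 𝒪(𝔹_N), if for every continuous h on b𝔹_N some sequence of dilates f_{r_j} converges to h pointwise on b𝔹_N, a contradiction follows; indeed the pointwise convergence of dilates of a fixed f to every continuous h cannot even hold on a fixed nonempty open subset of b𝔹_N. -/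
open Set Filter Topology Metric MeasureTheory
open scoped ENNReal NNReal InnerProductSpace ComplexConjugate

noncomputable section

/-- `ℂ^N` with the Euclidean structure. -/
abbrev EN (N : ℕ) := EuclideanSpace ℂ (Fin N)

instance {N : ℕ} : MeasurableSpace (EN N) := borel _
instance {N : ℕ} : BorelSpace (EN N) := ⟨rfl⟩

/-- A domain: a nonempty open connected subset. -/
def IsDomainSet {N : ℕ} (D : Set (EN N)) : Prop := IsOpen D ∧ IsConnected D

/-- `u` is plurisubharmonic on `D`: upper semicontinuous on `D`, and its restriction to
every complex affine line satisfies the sub-mean value inequality on every closed disc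
(of that line) contained in `D`. -/
def PlurisubharmonicOn {N : ℕ} (u : EN N → ℝ) (D : Set (EN N)) : Prop :=
  UpperSemicontinuousOn u D ∧
  ∀ (a b : EN N) (t₀ : ℂ) (r : ℝ), 0 < r →
    (fun t : ℂ => a + t • b) '' Metric.closedBall t₀ r ⊆ D →
    u (a + t₀ • b) ≤ (2 * Real.pi)⁻¹ *
      ∫ θ in (0:ℝ)..(2 * Real.pi), u (a + (t₀ + r * Complex.exp (θ * Complex.I)) • b)

/-- `D` is a pseudoconvex domain: a domain carrying a continuous plurisubharmonic
exhaustion function. -/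
def Pseudoconvex {N : ℕ} (D : Set (EN N)) : Prop :=
  IsDomainSet D ∧ ∃ u : EN N → ℝ, ContinuousOn u D ∧ PlurisubharmonicOn u D ∧
    ∀ c : ℝ, IsCompact (closure {z ∈ D | u z < c}) ∧ closure {z ∈ D | u z < c} ⊆ D

/-- The space `𝒪(D)` of holomorphic functions on `D`, as a submodule of `ℂ^N → ℂ`. -/
def Hol {N : ℕ} (D : Set (EN N)) : Submodule ℂ (EN N → ℂ) where
  carrier := {f | DifferentiableOn ℂ f D}
  add_mem' hf hg := hf.add hg
  zero_mem' := differentiableOn_const 0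
  smul_mem' c f hf := hf.const_smul c

/-- The topology of uniform convergence on compact subsets of `D`, on `𝒪(D)`. -/
instance holTopology {N : ℕ} (D : Set (EN N)) : TopologicalSpace ↥(Hol D) :=
  TopologicalSpace.induced
    (fun f => UniformOnFun.ofFun {K : Set (EN N) | K ⊆ D ∧ IsCompact K} f.1)
    inferInstance

/-- A set is residual if it contains a dense `G_δ` set. -/
def ResidualIn {X : Type*} [TopologicalSpace X] (S : Set X) : Prop :=
  ∃ T : Set X, T ⊆ S ∧ IsGδ T ∧ Dense T

/-- `S` is densely lineable: `S ∪ {0}` contains a dense vector subspace. -/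
def DenselyLineableIn {X : Type*} [TopologicalSpace X] [AddCommMonoid X] [Module ℂ X]
    (S : Set X) : Prop :=
  ∃ p : Submodule ℂ X, Dense (p : Set X) ∧ (p : Set X) ⊆ S ∪ {0}

/-- `S` is spaceable: `S ∪ {0}` contains a closed infinite-dimensional vector subspace. -/
def SpaceableIn {X : Type*} [TopologicalSpace X] [AddCommMonoid X] [Module ℂ X]
    (S : Set X) : Prop :=
  ∃ p : Submodule ℂ X, IsClosed (p : Set X) ∧ ¬ Module.Finite ℂ ↥p ∧ (p : Set X) ⊆ S ∪ {0}

/-- A finite length path to `bD`: continuous and piecewise `C¹` on `[0,1)`, with values in `D`,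
finite length (total variation), converging to a boundary point of `D` as `r → 1`. -/
def FiniteLengthPathTo {N : ℕ} (D : Set (EN N)) (γ : ℝ → EN N) : Prop :=
  MapsTo γ (Ico (0:ℝ) 1) D ∧ ContinuousOn γ (Ico (0:ℝ) 1) ∧
  (∃ u : ℕ → ℝ, u 0 = 0 ∧ StrictMono u ∧ (∀ n, u n < 1) ∧ Tendsto u atTop (𝓝 1) ∧
    ∀ n, ContDiffOn ℝ 1 γ (Icc (u n) (u (n+1)))) ∧
  eVariationOn γ (Ico (0:ℝ) 1) < ⊤ ∧
  ∃ ζ ∈ frontier D, Tendsto γ (𝓝[<] (1:ℝ)) (𝓝 ζ)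

/-- The set of `f ∈ 𝒪(D)` with maximal cluster set along every finite length path to `bD`. -/
def WildSet {N : ℕ} (D : Set (EN N)) : Set ↥(Hol D) :=
  {f | ∀ γ : ℝ → EN N, FiniteLengthPathTo D γ → ∀ c : ℂ,
    ∃ r : ℕ → ℝ, (∀ n, r n ∈ Ico (0:ℝ) 1) ∧ Tendsto r atTop (𝓝 1) ∧
      Tendsto (fun n => f.1 (γ (r n))) atTop (𝓝 c)}

/-- The `𝒪(D)`-hull of `K`. -/
def holHull {N : ℕ} (D K : Set (EN N)) : Set (EN N) :=
  {z ∈ D | ∀ φ : EN N → ℂ, DifferentiableOn ℂ φ D → ‖φ z‖ ≤ ⨆ w ∈ K, ‖φ w‖}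

/-- `K` is `𝒪(D)`-convex. -/
def HolConvexIn {N : ℕ} (D K : Set (EN N)) : Prop := K ⊆ D ∧ holHull D K = K

/-- The polynomial hull of a compact subset of `ℂ`. -/
def polyHull1 (E : Set ℂ) : Set ℂ :=
  {z | ∀ p : Polynomial ℂ, ‖p.eval z‖ ≤ ⨆ w ∈ E, ‖p.eval w‖}

/-- The polynomial hull of a subset of `ℂ^N`. -/
def polyHull {N : ℕ} (E : Set (EN N)) : Set (EN N) :=
  {z | ∀ p : MvPolynomial (Fin N) ℂ,
    ‖MvPolynomial.eval (fun j => z j) p‖ ≤ ⨆ w ∈ E, ‖MvPolynomial.eval (fun j => w j) p‖}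

/-- `E ⊆ ℂ^N` is polynomially convex. -/
def PolynomiallyConvex {N : ℕ} (E : Set (EN N)) : Prop := polyHull E = E

/-- The (real) Hessian of `ρ` at `p`, applied to the pair `(v, w)`. -/
def Hess {N : ℕ} (ρ : EN N → ℝ) (p v w : EN N) : ℝ :=
  fderiv ℝ (fderiv ℝ ρ) p v w

/-- The Levi form `∑_{j,k} ∂²ρ/∂z_j∂z̄_k (p) w_j w̄_k`, expressed through the real Hessian. -/
def LeviForm {N : ℕ} (ρ : EN N → ℝ) (p w : EN N) : ℝ :=
  (Hess ρ p w w + Hess ρ p (Complex.I • w) (Complex.I • w)) / 4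

/-- `w` belongs to the complex tangent space `{w : ∑_j ∂ρ/∂z_j(p) w_j = 0}` at `p`. -/
def ComplexTangent {N : ℕ} (ρ : EN N → ℝ) (p w : EN N) : Prop :=
  fderiv ℝ ρ p w = 0 ∧ fderiv ℝ ρ p (Complex.I • w) = 0

/-- `ρ` is a `C²` defining function for `D` on the open neighborhood `V` of `cl D`. -/
def IsDefiningFunctionOn {N : ℕ} (D : Set (EN N)) (ρ : EN N → ℝ) (V : Set (EN N)) : Prop :=
  IsOpen V ∧ closure D ⊆ V ∧ ContDiffOn ℝ 2 ρ V ∧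
  D = {z ∈ V | ρ z < 0} ∧ ∀ p ∈ frontier D, fderiv ℝ ρ p ≠ 0

/-- `D` is a strictly pseudoconvex domain with defining function `ρ`. -/
def StrictPSCWith {N : ℕ} (D : Set (EN N)) (ρ : EN N → ℝ) : Prop :=
  IsDomainSet D ∧ Bornology.IsBounded D ∧ (∃ V, IsDefiningFunctionOn D ρ V) ∧
  ∀ p ∈ frontier D, ∀ w : EN N, w ≠ 0 → ComplexTangent ρ p w → 0 < LeviForm ρ p w

/-- `D` is a strictly pseudoconvex domain. -/
def StrictlyPseudoconvex {N : ℕ} (D : Set (EN N)) : Prop := ∃ ρ, StrictPSCWith D ρ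

/-- `ρ` and `σ` are at `C²`-distance `< ε` on `V`. -/
def C2DistLt {N : ℕ} (V : Set (EN N)) (ρ σ : EN N → ℝ) (ε : ℝ) : Prop :=
  ∀ z ∈ V, |ρ z - σ z| + ‖fderiv ℝ ρ z - fderiv ℝ σ z‖ +
    ‖fderiv ℝ (fderiv ℝ ρ) z - fderiv ℝ (fderiv ℝ σ) z‖ < ε

/-- The standing assumptions on the map `γ : bD × [0,1] → cl D`: it is `C^k`, maps
`bD × [0,1)` into `D`, satisfies `γ(x,1) = x`, and the curves `r ↦ γ(x,r)` hit `bD`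
transversally at `x` (the `r`-derivative at `1` is not annihilated by `dρ(x)`,
i.e. it is not tangent to `bD` at `x`). -/
def GammaMap {N : ℕ} (D : Set (EN N)) (ρ : EN N → ℝ) (γ : EN N × ℝ → EN N) (k : ℕ) : Prop :=
  ContDiffOn ℝ k γ ((frontier D) ×ˢ Icc (0:ℝ) 1) ∧
  (∀ x ∈ frontier D, ∀ r ∈ Ico (0:ℝ) 1, γ (x, r) ∈ D) ∧
  (∀ x ∈ frontier D, γ (x, 1) = x) ∧
  ∀ x ∈ frontier D, fderiv ℝ ρ x (derivWithin (fun r => γ (x, r)) (Icc (0:ℝ) 1) 1) ≠ 0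

/-- Assumption (†): for all `r` close enough to `1`, `bD_r := γ(bD × {r})` bounds a strictly
pseudoconvex domain `D_r ⊆ D` whose defining function converges to `ρ` in `C²` norm on a
neighborhood `V` of `cl D` as `r → 1`. -/
def Dagger {N : ℕ} (D : Set (EN N)) (ρ : EN N → ℝ) (γ : EN N × ℝ → EN N) : Prop :=
  ∃ V : Set (EN N), IsOpen V ∧ closure D ⊆ V ∧
  ∃ (Dr : ℝ → Set (EN N)) (ρr : ℝ → EN N → ℝ),
    ∀ ε > 0, ∃ r₀ ∈ Ico (0:ℝ) 1, ∀ r ∈ Ioo r₀ 1,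
      StrictPSCWith (Dr r) (ρr r) ∧ Dr r ⊆ D ∧
      frontier (Dr r) = (fun x => γ (x, r)) '' frontier D ∧
      C2DistLt V (ρr r) ρ ε

/-- The `(2N-1)`-dimensional Hausdorff (surface) measure on `bD`. -/
def surfMeasure {N : ℕ} (D : Set (EN N)) : Measure (EN N) :=
  (Measure.hausdorffMeasure (2 * (N:ℝ) - 1)).restrict (frontier D)

/-- The normalized surface measure on `bD`. -/
def surfMeasureNorm {N : ℕ} (D : Set (EN N)) : Measure (EN N) :=
  ((Measure.hausdorffMeasure (2 * (N:ℝ) - 1) : Measure (EN N)) (frontier D))⁻¹ • surfMeasure D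

/-- The set `𝒲((r_j))` of `f ∈ 𝒪(D)` such that every measurable function on `bD` is an
a.e. limit of `f ∘ γ(·, r_{j_k})` along some subsequence of `(r_j)`. -/
def WSet {N : ℕ} (D : Set (EN N)) (γ : EN N × ℝ → EN N) (r : ℕ → ℝ) : Set ↥(Hol D) :=
  {f | ∀ h : EN N → ℂ, Measurable h → ∃ φ : ℕ → ℕ, StrictMono φ ∧
    ∀ᵐ x ∂ surfMeasure D, Tendsto (fun k => f.1 (γ (x, r (φ k)))) atTop (𝓝 (h x))}

/-- `Γ` is a closed cap of a convex set `V`: the closure of a connected component of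
`V \ H` for some real affine hyperplane `H` (for convex `V`, a nonempty open half-space
slice of `V`). -/
def IsClosedCap {N : ℕ} (V : Set (EN N)) (Γ : Set (EN N)) : Prop :=
  ∃ (l : EN N →L[ℝ] ℝ) (c : ℝ), l ≠ 0 ∧ (V ∩ {z | c < l z}).Nonempty ∧
    Γ = closure (V ∩ {z | c < l z})

/-- `V` is a strictly convex domain: a bounded convex domain with `C²` boundary whose
defining function has positive definite real Hessian on the real tangent space. -/
def StrictlyConvexDomain {N : ℕ} (V : Set (EN N)) : Prop :=
  IsDomainSet V ∧ Bornology.IsBounded V ∧ Convex ℝ V ∧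
  ∃ (ρ : EN N → ℝ) (W : Set (EN N)), IsDefiningFunctionOn V ρ W ∧
    ∀ p ∈ frontier V, ∀ w : EN N, w ≠ 0 → fderiv ℝ ρ p w = 0 → 0 < Hess ρ p w w

/-- The defining function `‖z‖² - 1` of the unit ball. -/
def ballRho {N : ℕ} : EN N → ℝ := fun z => ‖z‖ ^ 2 - 1

/-- The normalized surface measure on the unit sphere of `ℂ^N`. -/
def sphMeasure (N : ℕ) : Measure (EN N) :=
  ((Measure.hausdorffMeasure (2 * (N:ℝ) - 1) : Measure (EN N)) (Metric.sphere 0 1))⁻¹ •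
    (Measure.hausdorffMeasure (2 * (N:ℝ) - 1)).restrict (Metric.sphere 0 1)

/-- `v` is a weight: increasing on `[0,∞)`, nonnegative, and tending to `∞`. -/
def IsWeight (v : ℝ → ℝ) : Prop :=
  (∀ x ∈ Ici (0:ℝ), 0 ≤ v x) ∧ MonotoneOn v (Ici 0) ∧ Tendsto v atTop atTop

/-- The norm `‖f‖ = sup_{z ∈ 𝔹_N} |f z| / v(|z|)` of `H_v^0`. -/
def hvNorm {N : ℕ} (v : ℝ → ℝ) (f : EN N → ℂ) : ℝ :=
  ⨆ z ∈ Metric.ball (0:EN N) 1, ‖f z‖ / v ‖z‖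

/-- Membership in `H_v^0`: `f` is holomorphic on `𝔹_N` and `sup_{|z|=r} |f z| / v(r) → 0`
as `r → 1⁻`. -/
def MemHv {N : ℕ} (v : ℝ → ℝ) (f : EN N → ℂ) : Prop :=
  DifferentiableOn ℂ f (Metric.ball 0 1) ∧
  Tendsto (fun r : ℝ => ⨆ z ∈ Metric.sphere (0:EN N) r, ‖f z‖ / v r) (𝓝[<] 1) (𝓝 0)

/-- `S` contains, relatively to `H_v^0` with its norm topology, a dense `G_δ` subset:
there are countably many relatively norm-open sets `U n` whose intersection with `H_v^0`
is norm-dense in `H_v^0` and contained in `S`. -/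
def ResidualInHv {N : ℕ} (v : ℝ → ℝ) (S : Set (EN N → ℂ)) : Prop :=
  ∃ U : ℕ → Set (EN N → ℂ),
    (∀ n, ∀ f, MemHv v f → f ∈ U n →
      ∃ δ > 0, ∀ g, MemHv v g → hvNorm v (g - f) < δ → g ∈ U n) ∧
    (∀ f, MemHv v f → ∀ δ > 0, ∃ g, MemHv v g ∧ (∀ n, g ∈ U n) ∧ hvNorm v (g - f) < δ) ∧
    ∀ f, MemHv v f → (∀ n, f ∈ U n) → f ∈ S

/-- `S` is densely lineable in `H_v^0`: `S ∪ {0}` contains a norm-dense subspace of `H_v^0`. -/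
def DenselyLineableInHv {N : ℕ} (v : ℝ → ℝ) (S : Set (EN N → ℂ)) : Prop :=
  ∃ p : Submodule ℂ (EN N → ℂ), (↑p ⊆ {f : EN N → ℂ | MemHv v f}) ∧ (↑p ⊆ S ∪ {0}) ∧
    ∀ f, MemHv v f → ∀ δ > 0, ∃ g ∈ p, hvNorm v (g - f) < δ

/-- `S` is spaceable in `H_v^0`: `S ∪ {0}` contains a norm-closed infinite-dimensional
subspace of `H_v^0`. -/
def SpaceableInHv {N : ℕ} (v : ℝ → ℝ) (S : Set (EN N → ℂ)) : Prop :=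
  ∃ p : Submodule ℂ (EN N → ℂ), (↑p ⊆ {f : EN N → ℂ | MemHv v f}) ∧ (↑p ⊆ S ∪ {0}) ∧
    ¬ Module.Finite ℂ ↥p ∧
    ∀ f, MemHv v f → (∀ δ > 0, ∃ g ∈ p, hvNorm v (g - f) < δ) → f ∈ p

/-- The standing assumptions on the family `{γ_z : z ∈ 𝔹_N}`: each `γ_z` is a `C¹` map
`b𝔹_N × [0,1] → cl 𝔹_N` into `𝔹_N` for `r < 1` with `γ_z(x,1) = x`, transversal approach
and (†), with joint continuity of `(z,x,r) ↦ γ_z(x,r)` and of `(z,r) ↦ ∂γ_z(x,r)/∂r`. -/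
def BallGammaFamily {N : ℕ} (γ : EN N → EN N × ℝ → EN N) : Prop :=
  (∀ z ∈ Metric.ball (0:EN N) 1,
    GammaMap (Metric.ball 0 1) ballRho (γ z) 1 ∧ Dagger (Metric.ball 0 1) ballRho (γ z)) ∧
  ContinuousOn (fun p : EN N × (EN N × ℝ) => γ p.1 p.2)
    (Metric.ball 0 1 ×ˢ (Metric.sphere 0 1 ×ˢ Icc (0:ℝ) 1)) ∧
  ∀ x ∈ Metric.sphere (0:EN N) 1,
    ContinuousOn (fun p : EN N × ℝ => derivWithin (fun r => γ p.1 (x, r)) (Icc (0:ℝ) 1) p.2)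
      (Metric.ball 0 1 ×ˢ Icc (0:ℝ) 1)

/-- The set of `f` such that for every `z ∈ 𝔹_N`, every measurable function on `b𝔹_N` is an
a.e. limit of `f ∘ γ_z(·, r_{j_k})` along some subsequence of `(r_j)`. -/
def WSetHv {N : ℕ} (γ : EN N → EN N × ℝ → EN N) (r : ℕ → ℝ) : Set (EN N → ℂ) :=
  {f | ∀ z ∈ Metric.ball (0:EN N) 1, ∀ h : EN N → ℂ, Measurable h →
    ∃ φ : ℕ → ℕ, StrictMono φ ∧
      ∀ᵐ x ∂ sphMeasure N, Tendsto (fun k => f (γ z (x, r (φ k)))) atTop (𝓝 (h x))}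

/-- The set `E_L^* = {γ_z(x,r) : x ∈ E, r ∈ [0,1], z ∈ L}`. -/
def EStarSet {N : ℕ} (γ : EN N → EN N × ℝ → EN N) (L E : Set (EN N)) : Set (EN N) :=
  {w | ∃ z ∈ L, ∃ x ∈ E, ∃ r ∈ Icc (0:ℝ) 1, w = γ z (x, r)}

/-- The Korányi approach region `D_α(x)`. -/
def Koranyi {N : ℕ} (α : ℝ) (x : EN N) : Set (EN N) :=
  {z ∈ Metric.ball (0:EN N) 1 | ‖1 - (⟪x, z⟫_ℂ : ℂ)‖ < α / 2 * (1 - ‖z‖ ^ 2)}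

/-- `h` has a `K`-limit at `x`: for every `α > 1` the values of `h` converge along every
sequence in `D_α(x)` converging to `x`. -/
def HasKLimitAt {N : ℕ} (h : EN N → ℂ) (x : EN N) : Prop :=
  ∀ α > (1:ℝ), ∃ c : ℂ, ∀ z : ℕ → EN N, (∀ i, z i ∈ Koranyi α x) →
    Tendsto z atTop (𝓝 x) → Tendsto (fun i => h (z i)) atTop (𝓝 c)

/-- The circle `bL_x = L_x ∩ b𝔹_N` cut out on the complex line through `x` and `0`. -/
def lineCircle {N : ℕ} (x : EN N) : Set (EN N) :=
  {z | ∃ t : ℂ, z = t • x} ∩ Metric.sphere 0 1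

end
lemma npu_norm_sq {N : ℕ} (x v : EN N) (hx : ‖x‖ = 1) (hv : ‖v‖ = 1)
    (h : (⟪x, v⟫_ℂ : ℂ) = 0) (a b : ℂ) : ‖a • x + b • v‖ ^ 2 = ‖a‖ ^ 2 + ‖b‖ ^ 2 := by
  rw [@norm_add_sq ℂ, inner_smul_left, inner_smul_right, h, norm_smul, norm_smul, hx, hv]
  simp

lemma npu_exists_orth {N : ℕ} (hN : 2 ≤ N) (x : EN N) :
    ∃ v : EN N, ‖v‖ = 1 ∧ (⟪x, v⟫_ℂ : ℂ) = 0 := by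
  have h1 := (Submodule.span ℂ {x}).finrank_add_finrank_orthogonal
  have h2 : Module.finrank ℂ (Submodule.span ℂ {x}) ≤ 1 := by
    simpa using finrank_span_le_card (R := ℂ) ({x} : Set (EN N))
  have h3 : Module.finrank ℂ (EN N) = N := by simp
  have hne : (Submodule.span ℂ {x})ᗮ ≠ ⊥ := by
    intro hb
    rw [hb, finrank_bot] at h1
    omega
  obtain ⟨v, hv, hv0⟩ := Submodule.exists_mem_ne_zero_of_ne_bot hne
  rw [Submodule.mem_orthogonal_singleton_iff_inner_right] at hv
  refine ⟨((‖v‖⁻¹ : ℝ) : ℂ) • v, ?_, ?_⟩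
  · rw [norm_smul, Complex.norm_real, norm_inv, norm_norm, inv_mul_cancel₀ (norm_ne_zero_iff.2 hv0)]
  · rw [inner_smul_right, hv, mul_zero]

/-- Maximum principle on a disc orthogonal to `x`: a bound for `f` on a spherical cap of
radius `r` passes to points of the radius. -/
lemma npu_max {N : ℕ} (hN : 2 ≤ N) (f : EN N → ℂ) (hf : DifferentiableOn ℂ f (ball 0 1))
    (x : EN N) (hx : ‖x‖ = 1) (δ M t r : ℝ) (hδ : 0 < δ) (ht0 : 0 < t) (htr : t < r) (hr : r < 1)
    (htδ : 1 - δ ^ 2 / 2 < t)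
    (hM : ∀ y : EN N, ‖y‖ = 1 → dist y x < δ → ‖f (r • y)‖ ≤ M) : ‖f (t • x)‖ ≤ M := by
  obtain ⟨v, hv, hxv⟩ := npu_exists_orth hN x
  have hr0 : 0 < r := ht0.trans htr
  have hρ2 : 0 < r ^ 2 - t ^ 2 := by nlinarith
  set ρ := Real.sqrt (r ^ 2 - t ^ 2) with hρ
  have hρ0 : 0 < ρ := Real.sqrt_pos.2 hρ2
  have hρs : ρ ^ 2 = r ^ 2 - t ^ 2 := Real.sq_sqrt hρ2.le
  have hnorm : ∀ l : ℂ, ‖(t : ℂ) • x + l • v‖ ^ 2 = t ^ 2 + ‖l‖ ^ 2 := by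
    intro l
    rw [npu_norm_sq x v hx hv hxv, Complex.norm_real, Real.norm_eq_abs, sq_abs]
  have hd : DiffContOnCl ℂ (fun l : ℂ => f ((t : ℂ) • x + l • v)) (ball 0 ρ) := by
    apply DifferentiableOn.diffContOnCl
    rw [closure_ball _ hρ0.ne']
    refine hf.comp (t := ball 0 1) (s := closedBall 0 ρ) (by fun_prop) ?_
    intro l hl
    rw [mem_closedBall_zero_iff] at hl
    rw [mem_ball_zero_iff]
    have := hnorm l
    have h3 : ‖l‖ ^ 2 ≤ ρ ^ 2 := by gcongr
    nlinarith [norm_nonneg ((t : ℂ) • x + l • v)]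
  have key := Complex.norm_le_of_forall_mem_frontier_norm_le (C := M) isBounded_ball hd ?_
    (z := 0) (subset_closure (mem_ball_self hρ0))
  · simpa using key
  intro l hl
  rw [frontier_ball _ hρ0.ne', mem_sphere_zero_iff_norm] at hl
  set z := (t : ℂ) • x + l • v with hz
  have hzn : ‖z‖ = r := by
    have := hnorm l
    rw [hl, hρs] at this
    nlinarith [norm_nonneg z]
  have hry : r • (r⁻¹ • z) = z := by rw [smul_smul, mul_inv_cancel₀ hr0.ne', one_smul]
  have := hM (r⁻¹ • z) (by rw [norm_smul, hzn, Real.norm_eq_abs, abs_of_pos (inv_pos.2 hr0),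
      inv_mul_cancel₀ hr0.ne']) ?_
  · rwa [hry] at this
  have e : r⁻¹ • z - x = ((r⁻¹ * t - 1 : ℝ) : ℂ) • x + (((r⁻¹ : ℝ) : ℂ) * l) • v := by
    rw [hz, ← Complex.coe_smul]
    push_cast
    module
  have h4 := npu_norm_sq x v hx hv hxv ((r⁻¹ * t - 1 : ℝ) : ℂ) (((r⁻¹ : ℝ) : ℂ) * l)
  rw [← e, Complex.norm_real, norm_mul, Complex.norm_real, hl, mul_pow, hρs,
    Real.norm_eq_abs, Real.norm_eq_abs, sq_abs, sq_abs] at h4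
  have h5 : ‖r⁻¹ • z - x‖ ^ 2 = 2 - 2 * (t / r) := by
    rw [h4]; field_simp; ring
  have h6 : t ≤ t / r := by
    rw [le_div_iff₀ hr0]; nlinarith
  rw [dist_eq_norm]
  nlinarith [norm_nonneg (r⁻¹ • z - x)]

lemma npu_local {N : ℕ} (hN : 2 ≤ N) (f : EN N → ℂ) (hf : DifferentiableOn ℂ f (ball 0 1))
    (W : Set (EN N)) (hW : IsOpen W) (hne : (W ∩ sphere (0:EN N) 1).Nonempty)
    (H : ∀ h : EN N → ℂ, ContinuousOn h (sphere 0 1) →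
          ∃ r : ℕ → ℝ, (∀ j, r j ∈ Ico (0:ℝ) 1) ∧ Tendsto r atTop (𝓝 1) ∧
            ∀ x ∈ W ∩ sphere (0:EN N) 1,
              Tendsto (fun j => f (r j • x)) atTop (𝓝 (h x))) : False := by
  obtain ⟨r, hr, hr1, hrt⟩ := H (fun _ => 0) continuousOn_const
  have hcont : ∀ j, Continuous (fun x : sphere (0:EN N) 1 => f (r j • (x : EN N))) := by
    intro j
    refine hf.continuousOn.comp_continuous (by fun_prop) ?_
    intro x
    rw [mem_ball_zero_iff, norm_smul, norm_eq_of_mem_sphere x, mul_one, Real.norm_eq_abs,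
      abs_of_nonneg (hr j).1]
    exact (hr j).2
  let F : Option ℕ → Set (sphere (0:EN N) 1) := fun o => match o with
    | none => {x | (x : EN N) ∈ Wᶜ}
    | some n => {x | ∀ j, ‖f (r j • (x : EN N))‖ ≤ n}
  have hFc : ∀ o, IsClosed (F o) := by
    rintro (_ | n)
    · exact hW.isClosed_compl.preimage continuous_subtype_val
    · simp only [F, ofPred_forall]
      exact isClosed_iInter fun j => isClosed_le (hcont j).norm continuous_const
  have hFU : ⋃ o, F o = univ := by
    refine eq_univ_of_forall fun x => mem_iUnion.2 ?_
    by_cases hx : (x : EN N) ∈ W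
    · obtain ⟨C, hC⟩ := (hrt x ⟨hx, x.2⟩).norm.bddAbove_range
      obtain ⟨n, hn⟩ := exists_nat_ge C
      exact ⟨some n, fun j => (hC ⟨j, rfl⟩).trans hn⟩
    · exact ⟨none, hx⟩
  have hdense := dense_iUnion_interior_of_closed hFc hFU
  obtain ⟨x1, hx1W, hx1S⟩ := hne
  obtain ⟨x, hxW, hxU⟩ := (hdense.inter_open_nonempty _
    (hW.preimage (continuous_subtype_val (p := fun z => z ∈ sphere (0:EN N) 1)))
    ⟨⟨x1, hx1S⟩, hx1W⟩)
  obtain ⟨o, ho⟩ := mem_iUnion.1 hxU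
  rcases o with _ | n
  · have hmem : x ∈ F none := interior_subset ho
    exact hmem hxW
  obtain ⟨δ, hδ, hball⟩ := Metric.mem_nhds_iff.1 (mem_interior_iff_mem_nhds.1 ho)
  have hx : ‖(x : EN N)‖ = 1 := norm_eq_of_mem_sphere x
  have bound : ∀ t : ℝ, 0 < t → t < 1 → 1 - δ ^ 2 / 2 < t → ‖f (t • (x : EN N))‖ ≤ n := by
    intro t ht0 ht1 htδ
    obtain ⟨j, hj⟩ := (hr1.eventually (lt_mem_nhds ht1)).exists
    refine npu_max hN f hf x hx δ n t (r j) hδ ht0 hj (hr j).2 htδ ?_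
    intro y hy hyx
    exact hball (show (⟨y, mem_sphere_zero_iff_norm.2 hy⟩ : sphere (0:EN N) 1) ∈ ball x δ from hyx) j
  obtain ⟨s, hs, hs1, hst⟩ := H (fun _ => ((n + 1 : ℝ) : ℂ)) continuousOn_const
  have hlim := (hst x ⟨hxW, x.2⟩).norm
  have hle : ‖((n + 1 : ℝ) : ℂ)‖ ≤ n := by
    refine le_of_tendsto hlim ?_
    filter_upwards [hs1.eventually (lt_mem_nhds (zero_lt_one)),
      hs1.eventually (lt_mem_nhds (show 1 - δ ^ 2 / 2 < 1 by nlinarith [pow_pos hδ 2]))] with j h1 h2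
    exact bound _ h1 (hs j).2 h2
  rw [Complex.norm_real, Real.norm_eq_abs, abs_of_nonneg (by positivity)] at hle
  linarith

/-- For `N ≥ 2` there is no `f ∈ 𝒪(𝔹_N)` whose dilates `f_{r_j}(x) = f(r_j x)` converge
pointwise on `b𝔹_N` to every continuous function on `b𝔹_N` (along sequences
`(r_j) ⊆ [0,1)` tending to `1` depending on the target); moreover, for any fixed `f` such
pointwise convergence to every continuous target cannot even hold on a fixed nonempty
relatively open subset of `b𝔹_N`. -/
theorem no_pointwise_universality {N : ℕ} (hN : 2 ≤ N) :
    (¬ ∃ f : EN N → ℂ, DifferentiableOn ℂ f (Metric.ball 0 1) ∧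
      ∀ h : EN N → ℂ, ContinuousOn h (Metric.sphere 0 1) →
        ∃ r : ℕ → ℝ, (∀ j, r j ∈ Ico (0:ℝ) 1) ∧ Tendsto r atTop (𝓝 1) ∧
          ∀ x ∈ Metric.sphere (0:EN N) 1,
            Tendsto (fun j => f (r j • x)) atTop (𝓝 (h x))) ∧
    ∀ f : EN N → ℂ, DifferentiableOn ℂ f (Metric.ball 0 1) →
      ∀ W : Set (EN N), IsOpen W → (W ∩ Metric.sphere (0:EN N) 1).Nonempty →
        ¬ ∀ h : EN N → ℂ, ContinuousOn h (Metric.sphere 0 1) →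
          ∃ r : ℕ → ℝ, (∀ j, r j ∈ Ico (0:ℝ) 1) ∧ Tendsto r atTop (𝓝 1) ∧
            ∀ x ∈ W ∩ Metric.sphere (0:EN N) 1,
              Tendsto (fun j => f (r j • x)) atTop (𝓝 (h x)) := by
  refine ⟨?_, fun f hf W hW hne H => npu_local hN f hf W hW hne H⟩
  rintro ⟨f, hf, H⟩
  have : Nontrivial (EN N) := by
    obtain ⟨v, hv, -⟩ := npu_exists_orth hN 0
    exact ⟨v, 0, fun h => by simp [h] at hv⟩
  refine npu_local hN f hf univ isOpen_univ ?_ ?_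
  · obtain ⟨v, hv, -⟩ := npu_exists_orth hN (0 : EN N)
    exact ⟨v, mem_univ _, mem_sphere_zero_iff_norm.2 hv⟩
  · simpa only [univ_inter] using H
end

section
/- Let N ≥ 2. The set of f ∈ 𝒪(𝔹_N) such that for every complex affine line L ⊆ ℂ^N intersecting 𝔹_N, the restriction of f to L ∩ 𝔹_N is non-extendable (i.e., there is no point ζ ∈ L ∩ b𝔹_N, no open neighborhood W of ζ in L, and no holomorphic function on (L ∩ 𝔹_N) ∪ W agreeing with f on L ∩ 𝔹_N near ζ) is residual in 𝒪(𝔹_N). -/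
open Set Filter Topology Metric MeasureTheory
open scoped ENNReal NNReal InnerProductSpace ComplexConjugate

/-- Finitely many unit vectors whose caps `|⟨v, z⟩| > ρ` cover the sphere. -/
lemma exists_net {N : ℕ} (ρ : ℝ) (hρ : ρ < 1) :
    ∃ F : Finset (EN N), (∀ v ∈ F, ‖v‖ = 1) ∧ ∀ ζ : EN N, ‖ζ‖ = 1 → ∃ v ∈ F, ρ < ‖(⟪v, ζ⟫_ℂ : ℂ)‖ := by
  classical
  have hc : IsCompact (sphere (0 : EN N) 1) := isCompact_sphere 0 1
  obtain ⟨t, ht⟩ := hc.elim_finite_subcover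
    (fun v : sphere (0 : EN N) 1 => {ζ : EN N | ρ < ‖(⟪(v : EN N), ζ⟫_ℂ : ℂ)‖})
    (fun v => isOpen_lt continuous_const (by fun_prop))
    (by
      intro ζ hζ
      refine mem_iUnion.2 ⟨⟨ζ, hζ⟩, ?_⟩
      have h1 : ‖ζ‖ = 1 := by simpa using hζ
      show ρ < ‖(⟪ζ, ζ⟫_ℂ : ℂ)‖
      rw [inner_self_eq_norm_sq_to_K, h1]
      simpa using hρ)
  refine ⟨t.image (fun v : sphere (0 : EN N) 1 => (v : EN N)), ?_, ?_⟩
  · intro v hv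
    obtain ⟨w, _, rfl⟩ := Finset.mem_image.1 hv
    simp
  · intro ζ hζ
    have := ht (show ζ ∈ sphere (0 : EN N) 1 by simpa using hζ)
    simp only [mem_iUnion] at this
    obtain ⟨v, hv, h⟩ := this
    exact ⟨v, Finset.mem_image.2 ⟨v, hv, rfl⟩, h⟩

lemma continuous_bdd_ball {N : ℕ} {q : EN N → ℂ} (hq : Continuous q) :
    ∃ M : ℝ, 0 ≤ M ∧ ∀ z : EN N, ‖z‖ ≤ 1 → ‖q z‖ ≤ M := by
  obtain ⟨M, hM⟩ := (isCompact_closedBall (0 : EN N) 1).exists_bound_of_continuousOn hq.continuousOn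
  refine ⟨M, (norm_nonneg _).trans (hM 0 (by simp)), fun z hz => hM z (by simpa using hz)⟩

/-- Sums of powers of linear functionals with rapidly increasing exponents. -/
lemma exists_lacunary {N : ℕ} (F : Finset (EN N)) (r ρ η : ℝ) (hr0 : 0 ≤ r) (hrρ : r < ρ)
    (hη : 0 < η) (hF : ∀ v ∈ F, ‖v‖ = 1) :
    ∀ (ε C : ℝ), 0 < ε → ∃ q : EN N → ℂ, Differentiable ℂ q ∧ (∀ z, ‖z‖ ≤ r → ‖q z‖ ≤ ε) ∧
      ∀ z : EN N, ‖z‖ ≤ 1 → (∀ v ∈ F, η ≤ |‖(⟪v, z⟫_ℂ : ℂ)‖ - ρ|) →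
        (∃ v ∈ F, ρ < ‖(⟪v, z⟫_ℂ : ℂ)‖) → C ≤ ‖q z‖ := by
  classical
  have hρ : 0 < ρ := hr0.trans_lt hrρ
  induction F using Finset.induction_on with
  | empty =>
    intro ε C hε
    exact ⟨fun _ => 0, differentiable_const 0, fun z _ => by simpa using hε.le,
      fun z _ _ h => by simp at h⟩
  | insert v F hv ih =>
    intro ε C hε
    obtain ⟨q, hq, hq1, hq2⟩ := ih (fun w hw => hF w (Finset.mem_insert_of_mem hw))
      (ε / 2) (C + 1) (by linarith)
    obtain ⟨M, hM0, hM⟩ := continuous_bdd_ball hq.continuous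
    have hv1 : ‖v‖ = 1 := hF v (Finset.mem_insert_self _ _)
    have e1 : ∀ᶠ k : ℕ in atTop, C + M ≤ ((ρ + η) / ρ) ^ k :=
      (tendsto_pow_atTop_atTop_of_one_lt (by rw [one_lt_div hρ]; linarith)).eventually_ge_atTop _
    have e2 : ∀ᶠ k : ℕ in atTop, (r / ρ) ^ k ≤ ε / 2 := by
      have := tendsto_pow_atTop_nhds_zero_of_lt_one (div_nonneg hr0 hρ.le)
        ((div_lt_one hρ).2 hrρ)
      exact this.eventually_le_const (by linarith)
    obtain ⟨k, hk1, hk2⟩ := (e1.and e2).exists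
    have hnorm : ∀ z : EN N, ‖((⟪v, z⟫_ℂ : ℂ) / (ρ : ℂ)) ^ k‖ = (‖(⟪v, z⟫_ℂ : ℂ)‖ / ρ) ^ k := by
      intro z
      rw [norm_pow, norm_div, Complex.norm_real, Real.norm_of_nonneg hρ.le]
    refine ⟨fun z => q z + ((⟪v, z⟫_ℂ : ℂ) / (ρ : ℂ)) ^ k, ?_, ?_, ?_⟩
    · have : Differentiable ℂ (fun z : EN N => (⟪v, z⟫_ℂ : ℂ)) := (innerSL ℂ v).differentiable
      simp only [div_eq_mul_inv]
      exact hq.add ((this.mul_const _).pow k)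
    · intro z hz
      refine (norm_add_le _ _).trans ?_
      rw [hnorm]
      have h1 : ‖(⟪v, z⟫_ℂ : ℂ)‖ ≤ r := by
        refine (norm_inner_le_norm v z).trans ?_
        rw [hv1, one_mul]; exact hz
      have h2 : (‖(⟪v, z⟫_ℂ : ℂ)‖ / ρ) ^ k ≤ (r / ρ) ^ k := by gcongr
      have := hq1 z hz
      linarith
    · intro z hz h1 h2
      show C ≤ ‖q z + ((⟪v, z⟫_ℂ : ℂ) / (ρ : ℂ)) ^ k‖
      have hvz := h1 v (Finset.mem_insert_self _ _)
      by_cases hlt : ρ < ‖(⟪v, z⟫_ℂ : ℂ)‖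
      · rw [abs_of_pos (by linarith)] at hvz
        have h3 : ((ρ + η) / ρ) ^ k ≤ (‖(⟪v, z⟫_ℂ : ℂ)‖ / ρ) ^ k := by
          gcongr
          linarith
        rw [← hnorm] at h3
        have h4 := norm_sub_le (q z + ((⟪v, z⟫_ℂ : ℂ) / (ρ : ℂ)) ^ k) (q z)
        rw [add_sub_cancel_left] at h4
        have := hM z hz
        linarith
      · have h3 : (‖(⟪v, z⟫_ℂ : ℂ)‖ / ρ) ^ k ≤ 1 :=
          pow_le_one₀ (by positivity) ((div_le_one hρ).2 (not_lt.1 hlt))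
        rw [← hnorm] at h3
        have h5 : C + 1 ≤ ‖q z‖ := by
          refine hq2 z hz (fun w hw => h1 w (Finset.mem_insert_of_mem hw)) ?_
          obtain ⟨w, hw, h⟩ := h2
          rcases Finset.mem_insert.1 hw with rfl | hw
          · exact absurd h hlt
          · exact ⟨w, hw, h⟩
        have h4 := norm_sub_le (q z + ((⟪v, z⟫_ℂ : ℂ) / (ρ : ℂ)) ^ k) (((⟪v, z⟫_ℂ : ℂ) / (ρ : ℂ)) ^ k)
        rw [add_sub_cancel_right] at h4
        linarith

/-- Moving inwards along a complex line. -/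
lemma norm_inward {N : ℕ} (ζ b : EN N) (hζ : ‖ζ‖ = 1) (hb : ‖b‖ = 1) (s : ℝ) :
    ‖ζ + (-(s : ℂ) * ⟪b, ζ⟫_ℂ) • b‖ ^ 2 = 1 - (2 * s - s ^ 2) * ‖(⟪b, ζ⟫_ℂ : ℂ)‖ ^ 2 := by
  have h1 := @norm_add_sq ℂ (EN N) _ _ _ ζ ((-(s : ℂ) * ⟪b, ζ⟫_ℂ) • b)
  rw [h1, hζ, inner_smul_right, norm_smul, hb, norm_mul, norm_neg, Complex.norm_real]
  have h2 : -(s : ℂ) * ⟪b, ζ⟫_ℂ * ⟪ζ, b⟫_ℂ = ((-s * ‖(⟪b, ζ⟫_ℂ : ℂ)‖ ^ 2 : ℝ) : ℂ) := by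
    rw [← inner_conj_symm ζ b, mul_assoc, Complex.mul_conj, Complex.normSq_eq_norm_sq]
    push_cast; ring
  rw [h2]
  simp only [RCLike.re_to_complex, Complex.ofReal_re, Real.norm_eq_abs, mul_one, mul_pow, sq_abs]
  ring

/-- A nonconstant real quadratic avoids a given value for small positive parameters. -/
lemma quad_ne (A B D : ℝ) (hA : A ≠ 0) : ∀ᶠ s : ℝ in 𝓝[>] 0, A * s ^ 2 + B * s + D ≠ 0 := by
  by_cases hD : D = 0
  · subst hD
    by_cases hB : B = 0
    · subst hB
      filter_upwards [self_mem_nhdsWithin] with s hs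
      have : s ≠ 0 := (ne_of_gt hs)
      simpa using ⟨hA, this⟩
    · have hc : ∀ᶠ s : ℝ in 𝓝[>] 0, A * s + B ≠ 0 := by
        apply Filter.Eventually.filter_mono nhdsWithin_le_nhds
        have : ContinuousAt (fun s : ℝ => A * s + B) 0 := by fun_prop
        exact this.eventually_ne (by simpa using hB)
      filter_upwards [self_mem_nhdsWithin, hc] with s hs h
      have : s ≠ 0 := (ne_of_gt hs)
      have h3 : A * s ^ 2 + B * s + 0 = s * (A * s + B) := by ring
      rw [h3]
      exact mul_ne_zero this h
  · apply Filter.Eventually.filter_mono nhdsWithin_le_nhds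
    have : ContinuousAt (fun s : ℝ => A * s ^ 2 + B * s + D) 0 := by fun_prop
    exact this.eventually_ne (by simpa using hD)

lemma exists_good_point {N : ℕ} (F : Finset (EN N)) (hF : ∀ v ∈ F, ‖v‖ = 1) (ρ c τ : ℝ)
    (hτ : 0 < τ) (hc : 0 < c) (hρ : 0 < ρ) (hρc : 1 - c ^ 2 < ρ ^ 2)
    (hcov : ∀ ζ : EN N, ‖ζ‖ = 1 → ∃ v ∈ F, ρ < ‖(⟪v, ζ⟫_ℂ : ℂ)‖)
    (ζ b : EN N) (hζ : ‖ζ‖ = 1) (hb : ‖b‖ = 1) (hcb : c ≤ ‖(⟪b, ζ⟫_ℂ : ℂ)‖) :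
    ∃ t : ℂ, ‖t‖ < τ ∧ ‖ζ + t • b‖ < 1 ∧ (∀ v ∈ F, ‖(⟪v, ζ + t • b⟫_ℂ : ℂ)‖ ≠ ρ) ∧
      ∃ v ∈ F, ρ < ‖(⟪v, ζ + t • b⟫_ℂ : ℂ)‖ := by
  set γ : ℂ := ⟪b, ζ⟫_ℂ with hγ
  have hγ0 : 0 < ‖γ‖ := hc.trans_le hcb
  obtain ⟨v₀, hv₀, hv₀ρ⟩ := hcov ζ hζ
  have e1 : ∀ᶠ s : ℝ in 𝓝[>] 0, ‖(-(s : ℂ) * γ)‖ < τ := by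
    apply Filter.Eventually.filter_mono nhdsWithin_le_nhds
    have : ContinuousAt (fun s : ℝ => ‖(-(s : ℂ) * γ)‖) 0 := by fun_prop
    exact this.eventually_lt_const (by simpa using hτ)
  have e2 : ∀ᶠ s : ℝ in 𝓝[>] 0, ρ < ‖(⟪v₀, ζ + (-(s : ℂ) * γ) • b⟫_ℂ : ℂ)‖ := by
    apply Filter.Eventually.filter_mono nhdsWithin_le_nhds
    have : ContinuousAt (fun s : ℝ => ‖(⟪v₀, ζ + (-(s : ℂ) * γ) • b⟫_ℂ : ℂ)‖) 0 := by fun_prop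
    exact this.eventually_const_lt (by simpa using hv₀ρ)
  have e3 : ∀ᶠ s : ℝ in 𝓝[>] 0, ‖ζ + (-(s : ℂ) * γ) • b‖ < 1 := by
    have h1 : ∀ᶠ s : ℝ in 𝓝[>] 0, s < 1 :=
      Filter.Eventually.filter_mono nhdsWithin_le_nhds (eventually_lt_nhds (by norm_num))
    filter_upwards [self_mem_nhdsWithin, h1] with s hs hs1
    have hs0 : (0 : ℝ) < s := hs
    have h2 := norm_inward ζ b hζ hb s
    rw [← hγ] at h2
    have h3 : 0 < (2 * s - s ^ 2) * ‖γ‖ ^ 2 := by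
      have : 0 < 2 * s - s ^ 2 := by nlinarith
      positivity
    nlinarith [norm_nonneg (ζ + (-(s : ℂ) * γ) • b)]
  have e4 : ∀ᶠ s : ℝ in 𝓝[>] 0, ∀ v ∈ F, ‖(⟪v, ζ + (-(s : ℂ) * γ) • b⟫_ℂ : ℂ)‖ ≠ ρ := by
    rw [Filter.eventually_all_finset]
    intro v hv
    by_cases hβ : (⟪v, b⟫_ℂ : ℂ) = 0
    · have h1 : ‖(⟪v, ζ⟫_ℂ : ℂ)‖ < ρ := by
        have h2 : (⟪v, ζ⟫_ℂ : ℂ) = ⟪v, ζ + (-((1 : ℝ) : ℂ) * γ) • b⟫_ℂ := by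
          rw [inner_add_right, inner_smul_right, hβ]; simp
        have h3 := norm_inward ζ b hζ hb 1
        rw [← hγ] at h3
        have h4 := norm_inner_le_norm (𝕜 := ℂ) v (ζ + (-((1 : ℝ) : ℂ) * γ) • b)
        rw [hF v hv, one_mul, ← h2] at h4
        have h5 : c ^ 2 ≤ ‖γ‖ ^ 2 := by gcongr
        refine h4.trans_lt ?_
        apply lt_of_pow_lt_pow_left₀ 2 hρ.le
        rw [h3]; nlinarith
      refine Filter.Eventually.of_forall fun s => ?_
      rw [inner_add_right, inner_smul_right, hβ]
      simpa using h1.ne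
    · have hβ' : 0 < ‖(⟪v, b⟫_ℂ : ℂ)‖ := norm_pos_iff.2 hβ
      set α : ℂ := ⟪v, ζ⟫_ℂ
      set β : ℂ := ⟪v, b⟫_ℂ
      have h6 : ∀ s : ℝ, ‖(⟪v, ζ + (-(s : ℂ) * γ) • b⟫_ℂ : ℂ)‖ ^ 2 =
          ‖γ * β‖ ^ 2 * s ^ 2 + (-2 * (α * conj (γ * β)).re) * s + ‖α‖ ^ 2 := by
        intro s
        rw [inner_add_right, inner_smul_right]
        change ‖α + -(s : ℂ) * γ * β‖ ^ 2 = _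
        rw [show α + -(s : ℂ) * γ * β = α - (s : ℂ) * (γ * β) by ring]
        generalize γ * β = w
        simp only [← Complex.normSq_eq_norm_sq, Complex.normSq_apply, Complex.sub_re,
          Complex.sub_im, Complex.mul_re, Complex.mul_im, Complex.ofReal_re, Complex.ofReal_im,
          Complex.conj_re, Complex.conj_im]
        ring
      have h7 := quad_ne (‖γ * β‖ ^ 2) (-2 * (α * conj (γ * β)).re) (‖α‖ ^ 2 - ρ ^ 2)
        (by rw [norm_mul]; positivity)
      filter_upwards [h7] with s hs h
      apply hs
      have := h6 s
      rw [h] at this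
      linarith
  obtain ⟨s, h1, h2, h3, h4⟩ := (e1.and (e2.and (e3.and e4))).exists
  exact ⟨_, h1, h3, h4, v₀, hv₀, h2⟩

/-- One block: small on `‖z‖ ≤ r`, large somewhere on every sufficiently transversal line. -/
lemma exists_block {N : ℕ} (c τ r ε C : ℝ) (hc : 0 < c) (hτ : 0 < τ) (hr0 : 0 ≤ r) (hr : r < 1)
    (hε : 0 < ε) :
    ∃ q : EN N → ℂ, Differentiable ℂ q ∧ (∀ z, ‖z‖ ≤ r → ‖q z‖ ≤ ε) ∧
      ∃ r' : ℝ, r' < 1 ∧ ∀ ζ b : EN N, ‖ζ‖ = 1 → ‖b‖ = 1 → c ≤ ‖(⟪b, ζ⟫_ℂ : ℂ)‖ →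
        ∃ t : ℂ, ‖t‖ < τ ∧ ‖ζ + t • b‖ ≤ r' ∧ C ≤ ‖q (ζ + t • b)‖ := by
  obtain ⟨ρ, hrρ, hρ1, hρc⟩ : ∃ ρ : ℝ, r < ρ ∧ ρ < 1 ∧ 1 - c ^ 2 < ρ ^ 2 := by
    have e1 : ∀ᶠ ρ : ℝ in 𝓝[<] 1, r < ρ :=
      Filter.Eventually.filter_mono nhdsWithin_le_nhds (eventually_gt_nhds hr)
    have e2 : ∀ᶠ ρ : ℝ in 𝓝[<] 1, 1 - c ^ 2 < ρ ^ 2 := by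
      apply Filter.Eventually.filter_mono nhdsWithin_le_nhds
      have : ContinuousAt (fun ρ : ℝ => ρ ^ 2) 1 := by fun_prop
      exact this.eventually_const_lt (by have : 0 < c ^ 2 := by positivity
                                         simpa using this)
    obtain ⟨ρ, h1, h2, h3⟩ := (e1.and (e2.and self_mem_nhdsWithin)).exists
    exact ⟨ρ, h1, h3, h2⟩
  have hρ0 : 0 < ρ := hr0.trans_lt hrρ
  obtain ⟨F, hF, hcov⟩ := exists_net (N := N) ρ hρ1
  let P : Set (EN N × EN N) :=
    (sphere 0 1 ×ˢ sphere 0 1) ∩ {p | c ≤ ‖(⟪p.2, p.1⟫_ℂ : ℂ)‖}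
  have hP : IsCompact P :=
    ((isCompact_sphere _ _).prod (isCompact_sphere _ _)).inter_right
      (isClosed_le continuous_const (by fun_prop))
  let δ : ℕ → ℝ := fun j => 1 / ((j : ℝ) + 1)
  have hδ0 : ∀ j, 0 < δ j := fun j => Nat.one_div_pos_of_nat
  have hδa : ∀ i j, i ≤ j → δ j ≤ δ i := fun i j h => Nat.one_div_le_one_div h
  let V : ℕ → Set (EN N × EN N) := fun j => ⋃ t ∈ {t : ℂ | ‖t‖ < τ},
    {p | ‖p.1 + t • p.2‖ < 1 - δ j} ∩
    ((⋂ v ∈ F, {p | δ j < |‖(⟪v, p.1 + t • p.2⟫_ℂ : ℂ)‖ - ρ|}) ∩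
      (⋃ v ∈ F, {p | ρ < ‖(⟪v, p.1 + t • p.2⟫_ℂ : ℂ)‖}))
  have hVo : ∀ j, IsOpen (V j) := by
    intro j
    refine isOpen_biUnion fun t _ => ?_
    refine (isOpen_lt (by fun_prop) continuous_const).inter (IsOpen.inter ?_ ?_)
    · exact isOpen_biInter_finset fun v _ => isOpen_lt continuous_const (by fun_prop)
    · exact isOpen_biUnion fun v _ => isOpen_lt continuous_const (by fun_prop)
  have hVd : Directed (· ⊆ ·) V := by
    apply Monotone.directed_le
    intro i j hij p hp
    simp only [V, mem_iUnion, mem_inter_iff, mem_iInter, mem_ofPred_eq] at hp ⊢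
    obtain ⟨t, ht, h1, h2, h3⟩ := hp
    have := hδa i j hij
    exact ⟨t, ht, by linarith, fun v hv => this.trans_lt (h2 v hv), h3⟩
  have hPV : P ⊆ ⋃ j, V j := by
    rintro ⟨ζ, b⟩ ⟨⟨hζ, hb⟩, hcb⟩
    obtain ⟨t, ht, h1, h2, h3⟩ := exists_good_point F hF ρ c τ hτ hc hρ0 hρc hcov ζ b
      (by simpa using hζ) (by simpa using hb) hcb
    have hδt : Tendsto δ atTop (𝓝 0) := tendsto_one_div_add_atTop_nhds_zero_nat
    have e1 : ∀ᶠ j in atTop, δ j < 1 - ‖ζ + t • b‖ := hδt.eventually_lt_const (by linarith)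
    have e2 : ∀ᶠ j in atTop, ∀ v ∈ F, δ j < |‖(⟪v, ζ + t • b⟫_ℂ : ℂ)‖ - ρ| := by
      rw [Filter.eventually_all_finset]
      intro v hv
      exact hδt.eventually_lt_const (abs_pos.2 (sub_ne_zero.2 (h2 v hv)))
    obtain ⟨j, hj1, hj2⟩ := (e1.and e2).exists
    refine mem_iUnion.2 ⟨j, ?_⟩
    simp only [V, mem_iUnion, mem_inter_iff, mem_iInter, mem_ofPred_eq]
    obtain ⟨v, hv, h⟩ := h3
    exact ⟨t, ht, by linarith, hj2, v, hv, h⟩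
  obtain ⟨j, hj⟩ := hP.elim_directed_cover V hVo hPV hVd
  obtain ⟨q, hq, hq1, hq2⟩ := exists_lacunary F r ρ (δ j) hr0 hrρ (hδ0 j) hF ε C hε
  refine ⟨q, hq, hq1, 1 - δ j, by linarith [hδ0 j], ?_⟩
  intro ζ b hζ hb hcb
  have hp : (ζ, b) ∈ V j := hj ⟨⟨by simpa using hζ, by simpa using hb⟩, hcb⟩
  simp only [V, mem_iUnion, mem_inter_iff, mem_iInter, mem_ofPred_eq] at hp
  obtain ⟨t, ht, h1, h2, v, hv, h3⟩ := hp
  refine ⟨t, ht, h1.le, hq2 _ (by linarith [hδ0 j]) (fun v hv => (h2 v hv).le) ⟨v, hv, h3⟩⟩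

/-- Cauchy estimate for the Fréchet derivative of an entire function. -/
lemma cauchy_fderiv {N : ℕ} (q : EN N → ℂ) (hq : Differentiable ℂ q) (r d ε : ℝ) (hd : 0 < d)
    (hε : 0 ≤ ε) (h : ∀ z, ‖z‖ ≤ r + d → ‖q z‖ ≤ ε) (z : EN N) (hz : ‖z‖ ≤ r) :
    ‖fderiv ℂ q z‖ ≤ ε / d := by
  refine ContinuousLinearMap.opNorm_le_of_unit_norm (𝕜 := ℂ) (by positivity) ?_
  intro v hv
  have hlin : ∀ t : ℂ, HasDerivAt (fun t : ℂ => z + t • v) v t := fun t => by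
    simpa using ((hasDerivAt_id t).smul_const v).const_add z
  have h1 : HasDerivAt (fun t : ℂ => q (z + t • v)) (fderiv ℂ q z v) 0 := by
    have := (hq (z + (0 : ℂ) • v)).hasFDerivAt.comp_hasDerivAt (0 : ℂ) (hlin 0)
    rw [zero_smul, add_zero] at this
    exact this
  rw [← h1.deriv]
  refine Complex.norm_deriv_le_of_forall_mem_sphere_norm_le hd ?_ ?_
  · apply Differentiable.diffContOnCl
    intro t
    exact ((hq _).hasFDerivAt.comp_hasDerivAt t (hlin t)).differentiableAt
  · intro t ht
    apply h
    have ht' : ‖t‖ = d := by simpa using ht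
    calc ‖z + t • v‖ ≤ ‖z‖ + ‖t • v‖ := norm_add_le _ _
      _ ≤ r + d := by rw [norm_smul, hv, ht']; linarith

lemma step_lemma {N : ℕ} (n : ℕ) (Q : EN N → ℂ) (hQ : Differentiable ℂ Q) (r : ℝ) (hr0 : 0 ≤ r)
    (hr : r < 1) :
    ∃ (Q' : EN N → ℂ) (r' : ℝ), Differentiable ℂ Q' ∧ 0 ≤ r' ∧ r' < 1 ∧ (1 + r) / 2 ≤ r' ∧
      (∀ z, ‖z‖ ≤ r → ‖Q' z - Q z‖ ≤ (1 / 2) ^ n ∧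
        ‖fderiv ℂ (fun w => Q' w - Q w) z‖ ≤ (1 / 2) ^ n) ∧
      ∀ ζ b : EN N, ‖ζ‖ = 1 → ‖b‖ = 1 → 1 / ((n : ℝ) + 1) ≤ ‖(⟪b, ζ⟫_ℂ : ℂ)‖ →
        ∃ t : ℂ, ‖t‖ < 1 / ((n : ℝ) + 1) ∧ ‖ζ + t • b‖ ≤ r' ∧ (n : ℝ) + 2 ≤ ‖Q' (ζ + t • b)‖ := by
  obtain ⟨M, hM0, hM⟩ := continuous_bdd_ball hQ.continuous
  set d : ℝ := (1 - r) / 2 with hd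
  have hd0 : 0 < d := by rw [hd]; linarith
  have hn : (0 : ℝ) < 1 / ((n : ℝ) + 1) := Nat.one_div_pos_of_nat
  obtain ⟨q, hq, hq1, r', hr', hq2⟩ := exists_block (N := N) (1 / ((n : ℝ) + 1)) (1 / ((n : ℝ) + 1))
    (r + d) ((1 / 2) ^ n * min 1 d) (M + n + 2) hn hn (by linarith) (by linarith)
    (by positivity)
  refine ⟨fun z => Q z + q z, max r' ((1 + r) / 2), hQ.add hq, ?_, ?_, le_max_right _ _, ?_, ?_⟩
  · exact le_max_of_le_right (by linarith)
  · exact max_lt hr' (by linarith)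
  · intro z hz
    simp only [add_sub_cancel_left]
    constructor
    · refine (hq1 z (by linarith)).trans ?_
      have : min 1 d ≤ 1 := min_le_left _ _
      have h2 : (0 : ℝ) < (1 / 2) ^ n := by positivity
      nlinarith
    · refine (cauchy_fderiv q hq r d _ hd0 (by positivity) hq1 z hz).trans ?_
      rw [div_le_iff₀ hd0]
      have : min 1 d ≤ d := min_le_right _ _
      gcongr
  · intro ζ b hζ hb hcb
    obtain ⟨t, ht, h1, h2⟩ := hq2 ζ b hζ hb hcb
    refine ⟨t, ht, h1.trans (le_max_left _ _), ?_⟩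
    have h3 := hM (ζ + t • b) (by linarith)
    have h4 := norm_sub_le (Q (ζ + t • b) + q (ζ + t • b)) (Q (ζ + t • b))
    rw [add_sub_cancel_left] at h4
    linarith

/-- A function in the ball which is unbounded near every boundary point on every line. -/
lemma exists_wild {N : ℕ} : ∃ h : EN N → ℂ, DifferentiableOn ℂ h (ball 0 1) ∧
    ∀ n : ℕ, ∃ r' : ℝ, r' < 1 ∧ ∀ ζ b : EN N, ‖ζ‖ = 1 → ‖b‖ = 1 →
      1 / ((n : ℝ) + 1) ≤ ‖(⟪b, ζ⟫_ℂ : ℂ)‖ →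
        ∃ t : ℂ, ‖t‖ < 1 / ((n : ℝ) + 1) ∧ ‖ζ + t • b‖ ≤ r' ∧ (n : ℝ) ≤ ‖h (ζ + t • b)‖ := by
  let St := {p : (EN N → ℂ) × ℝ // Differentiable ℂ p.1 ∧ 0 ≤ p.2 ∧ p.2 < 1}
  have hstep : ∀ (n : ℕ) (p : St), ∃ p' : St, (1 + p.1.2) / 2 ≤ p'.1.2 ∧
      (∀ z, ‖z‖ ≤ p.1.2 → ‖p'.1.1 z - p.1.1 z‖ ≤ (1 / 2) ^ n ∧
        ‖fderiv ℂ (fun w => p'.1.1 w - p.1.1 w) z‖ ≤ (1 / 2) ^ n) ∧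
      ∀ ζ b : EN N, ‖ζ‖ = 1 → ‖b‖ = 1 → 1 / ((n : ℝ) + 1) ≤ ‖(⟪b, ζ⟫_ℂ : ℂ)‖ →
        ∃ t : ℂ, ‖t‖ < 1 / ((n : ℝ) + 1) ∧ ‖ζ + t • b‖ ≤ p'.1.2 ∧
          (n : ℝ) + 2 ≤ ‖p'.1.1 (ζ + t • b)‖ := by
    rintro n ⟨⟨Q, r⟩, hQ, hr0, hr⟩
    obtain ⟨Q', r', h1, h2, h3, h4, h5, h6⟩ := step_lemma n Q hQ r hr0 hr
    exact ⟨⟨⟨Q', r'⟩, h1, h2, h3⟩, h4, h5, h6⟩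
  choose nxt hn1 hn2 hn3 using hstep
  let S : ℕ → St := fun n => Nat.rec ⟨⟨fun _ => 0, 0⟩, differentiable_const 0, le_rfl, one_pos⟩
    (fun n p => nxt n p) n
  have hS : ∀ n, S (n + 1) = nxt n (S n) := fun n => rfl
  let Q : ℕ → EN N → ℂ := fun n => (S n).1.1
  let r : ℕ → ℝ := fun n => (S n).1.2
  have hQ0 : ∀ z, Q 0 z = 0 := fun z => rfl
  have hQd : ∀ n, Differentiable ℂ (Q n) := fun n => (S n).2.1
  have hr1 : ∀ n, r n < 1 := fun n => (S n).2.2.2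
  have hrs : ∀ n, (1 + r n) / 2 ≤ r (n + 1) := fun n => hn1 n (S n)
  let q : ℕ → EN N → ℂ := fun n z => Q (n + 1) z - Q n z
  have hqd : ∀ n, Differentiable ℂ (q n) := fun n => (hQd (n + 1)).sub (hQd n)
  have hq : ∀ n z, ‖z‖ ≤ r n → ‖q n z‖ ≤ (1 / 2) ^ n ∧ ‖fderiv ℂ (q n) z‖ ≤ (1 / 2) ^ n :=
    fun n => hn2 n (S n)
  have hrm : Monotone r := monotone_nat_of_le_succ fun n => by linarith [hrs n, hr1 n]
  have hrlow : ∀ n, 1 - (1 / 2 : ℝ) ^ n ≤ r n := by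
    intro n
    induction n with
    | zero => simpa using (S 0).2.2.1
    | succ k ih => rw [pow_succ]; linarith [hrs k]
  have hrt : ∀ x : ℝ, x < 1 → ∃ m, x < r m := by
    intro x hx
    obtain ⟨m, hm⟩ := exists_pow_lt_of_lt_one (sub_pos.2 hx) (by norm_num : (1 / 2 : ℝ) < 1)
    exact ⟨m, by linarith [hrlow m]⟩
  have hsum : Summable fun n : ℕ => (1 / 2 : ℝ) ^ n := summable_geometric_two
  have hsumm : ∀ m, Summable fun n : ℕ => (1 / 2 : ℝ) ^ (n + m) :=
    fun m => (summable_nat_add_iff m).2 hsum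
  have hqb : ∀ m n z, ‖z‖ ≤ r m → ‖q (n + m) z‖ ≤ (1 / 2) ^ (n + m) := fun m n z hz =>
    (hq (n + m) z (hz.trans (hrm (by omega)))).1
  have hqtail : ∀ m z, ‖z‖ ≤ r m → Summable fun n => q (n + m) z := fun m z hz =>
    Summable.of_norm_bounded (hsumm m) fun n => hqb m n z hz
  have hqsum : ∀ m z, ‖z‖ ≤ r m → Summable fun n => q n z := fun m z hz =>
    (summable_nat_add_iff m).1 (hqtail m z hz)
  have hpart : ∀ m z, ∑ i ∈ Finset.range m, q i z = Q m z := by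
    intro m z
    have := Finset.sum_range_sub (fun i => Q i z) m
    simpa [q, hQ0] using this
  have hsplit : ∀ m z, ‖z‖ ≤ r m → ∑' n, q n z = Q m z + ∑' n, q (n + m) z := by
    intro m z hz
    rw [← hpart, (hqsum m z hz).sum_add_tsum_nat_add]
  refine ⟨fun z => ∑' n, q n z, ?_, ?_⟩
  · intro z hz
    have hz1 : ‖z‖ < 1 := by simpa using hz
    obtain ⟨m, hm⟩ := hrt _ hz1
    have hzb : z ∈ ball (0 : EN N) (r m) := by simpa using hm
    have h1 : HasFDerivAt (fun y => ∑' n, q (n + m) y) (∑' n, fderiv ℂ (q (n + m)) z) z := by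
      refine hasFDerivAt_tsum_of_isPreconnected (hsumm m) isOpen_ball
        (convex_ball (0 : EN N) (r m)).isPreconnected
        (fun n x _ => (hqd (n + m) x).hasFDerivAt) ?_ hzb (hqtail m z hm.le) hzb
      intro n x hx
      have hx' : ‖x‖ < r m := by simpa using hx
      exact (hq (n + m) x (hx'.le.trans (hrm (by omega)))).2
    have h2 : DifferentiableAt ℂ (fun y => Q m y + ∑' n, q (n + m) y) z :=
      (hQd m z).add h1.differentiableAt
    refine (h2.congr_of_eventuallyEq ?_).differentiableWithinAt
    filter_upwards [isOpen_ball.mem_nhds hzb] with y hy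
    exact hsplit m y (by simpa using (mem_ball_zero_iff.1 hy).le)
  · intro n
    refine ⟨r (n + 1), hr1 (n + 1), fun ζ b hζ hb hcb => ?_⟩
    obtain ⟨t, ht, h1, h2⟩ := hn3 n (S n) ζ b hζ hb hcb
    refine ⟨t, ht, h1, ?_⟩
    show (n : ℝ) ≤ ‖∑' k, q k (ζ + t • b)‖
    have h1' : ‖ζ + t • b‖ ≤ r (n + 1) := h1
    have h2' : (n : ℝ) + 2 ≤ ‖Q (n + 1) (ζ + t • b)‖ := h2
    rw [hsplit (n + 1) _ h1']
    have h3 : ‖∑' k, q (k + (n + 1)) (ζ + t • b)‖ ≤ 1 := by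
      refine (tsum_of_norm_bounded (hsumm (n + 1)).hasSum fun k => hqb (n + 1) k _ h1').trans ?_
      simp only [pow_add]
      rw [tsum_mul_right, tsum_geometric_two]
      have : (1 / 2 : ℝ) ^ n ≤ 1 := pow_le_one₀ (by norm_num) (by norm_num)
      linarith
    have h4 := norm_sub_le (Q (n + 1) (ζ + t • b) + ∑' k, q (k + (n + 1)) (ζ + t • b))
      (∑' k, q (k + (n + 1)) (ζ + t • b))
    rw [add_sub_cancel_right] at h4
    linarith

/-- The open sets whose intersection is the dense `G_δ` set. -/
def USet (N : ℕ) (n : ℕ) : Set ↥(Hol (Metric.ball (0 : EN N) 1)) :=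
  {f | ∃ r' : ℝ, r' < 1 ∧ ∃ δ : ℝ, 0 < δ ∧ ∀ ζ b : EN N, ‖ζ‖ = 1 → ‖b‖ = 1 →
      1 / ((n : ℝ) + 1) ≤ ‖(⟪b, ζ⟫_ℂ : ℂ)‖ →
        ∃ t : ℂ, ‖t‖ < 1 / ((n : ℝ) + 1) ∧ ‖ζ + t • b‖ ≤ r' ∧ (n : ℝ) + δ ≤ ‖f.1 (ζ + t • b)‖}

lemma isOpen_USet (N n : ℕ) : IsOpen (USet N n) := by
  rw [isOpen_iff_mem_nhds]
  rintro f ⟨r', hr', δ, hδ, h⟩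
  rw [nhds_induced]
  have hK : closedBall (0 : EN N) r' ∈ {K : Set (EN N) | K ⊆ ball (0 : EN N) 1 ∧ IsCompact K} :=
    ⟨closedBall_subset_ball hr', isCompact_closedBall _ _⟩
  refine ⟨_, UniformOnFun.gen_mem_nhds ℂ _
    (UniformOnFun.ofFun {K : Set (EN N) | K ⊆ ball (0 : EN N) 1 ∧ IsCompact K} f.1) hK
    (Metric.dist_mem_uniformity (half_pos hδ)), ?_⟩
  intro g hg
  refine ⟨r', hr', δ / 2, half_pos hδ, fun ζ b hζ hb hcb => ?_⟩
  obtain ⟨t, ht, h1, h2⟩ := h ζ b hζ hb hcb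
  refine ⟨t, ht, h1, ?_⟩
  have h3 : dist (f.1 (ζ + t • b)) (g.1 (ζ + t • b)) < δ / 2 :=
    hg (ζ + t • b) (by simpa using h1)
  rw [dist_eq_norm] at h3
  have h4 := norm_sub_norm_le (f.1 (ζ + t • b)) (g.1 (ζ + t • b))
  linarith

lemma dense_iInter_USet (N : ℕ) : Dense (⋂ n, USet N n) := by
  intro f
  obtain ⟨h, hh, hw⟩ := exists_wild (N := N)
  have hfd : DifferentiableOn ℂ f.1 (ball (0 : EN N) 1) := f.2
  let s : ℕ → ℝ := fun k => 1 / ((k : ℝ) + 1)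
  have hs0 : ∀ k, 0 < s k := fun k => Nat.one_div_pos_of_nat
  have hs1 : ∀ k, s k ≤ 1 := fun k => by
    have : (0 : ℝ) ≤ k := k.cast_nonneg
    exact (div_le_one (by positivity)).2 (by linarith)
  have hst : Tendsto s atTop (𝓝 0) := tendsto_one_div_add_atTop_nhds_zero_nat
  have hscale : ∀ k (z : EN N), ‖((1 - s k : ℝ) : ℂ) • z‖ = (1 - s k) * ‖z‖ := by
    intro k z
    rw [norm_smul, Complex.norm_real, Real.norm_of_nonneg (by linarith [hs1 k])]
  have hmaps : ∀ k, MapsTo (fun z : EN N => ((1 - s k : ℝ) : ℂ) • z) (ball 0 1) (ball 0 1) := by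
    intro k z hz
    have hz' : ‖z‖ < 1 := by simpa using hz
    rw [mem_ball_zero_iff, hscale]
    nlinarith [hs0 k, hs1 k, norm_nonneg z]
  have hmem : ∀ k, (fun z : EN N => f.1 (((1 - s k : ℝ) : ℂ) • z) + (s k : ℂ) * h z) ∈
      Hol (ball (0 : EN N) 1) := by
    intro k
    have h1 : DifferentiableOn ℂ (fun z : EN N => f.1 (((1 - s k : ℝ) : ℂ) • z)) (ball 0 1) :=
      hfd.comp ((differentiable_id.const_smul (((1 - s k : ℝ) : ℂ))).differentiableOn) (hmaps k)
    exact h1.add (hh.const_mul _)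
  let F : ℕ → ↥(Hol (ball (0 : EN N) 1)) := fun k => ⟨_, hmem k⟩
  refine mem_closure_of_tendsto (f := F) (b := atTop) ?_ (Eventually.of_forall fun k => ?_)
  · rw [nhds_induced, tendsto_comap_iff, UniformOnFun.tendsto_iff_tendstoUniformlyOn]
    rintro K ⟨hKB, hK⟩
    rw [Metric.tendstoUniformlyOn_iff]
    intro ε hε
    -- `K` sits in a smaller closed ball
    obtain ⟨R, hR1, hKR⟩ : ∃ R : ℝ, R < 1 ∧ K ⊆ closedBall (0 : EN N) R := by
      rcases K.eq_empty_or_nonempty with rfl | hne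
      · exact ⟨0, one_pos, empty_subset _⟩
      · obtain ⟨z₀, hz₀, hmax⟩ := hK.exists_isMaxOn hne (continuous_norm.continuousOn)
        exact ⟨‖z₀‖, by simpa using hKB hz₀, fun z hz => by simpa using hmax hz⟩
    have huc : UniformContinuousOn f.1 (closedBall (0 : EN N) R) :=
      (isCompact_closedBall _ _).uniformContinuousOn_of_continuous
        (hfd.continuousOn.mono (closedBall_subset_ball hR1))
    rw [Metric.uniformContinuousOn_iff] at huc
    obtain ⟨d, hd, huc⟩ := huc (ε / 2) (half_pos hε)
    obtain ⟨M, hM⟩ := (isCompact_closedBall (0 : EN N) R).exists_bound_of_continuousOn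
      (hh.continuousOn.mono (closedBall_subset_ball hR1))
    have e1 : ∀ᶠ k in atTop, s k < d := hst.eventually_lt_const hd
    have e2 : ∀ᶠ k in atTop, s k * M < ε / 2 := by
      have := hst.mul_const M
      rw [zero_mul] at this
      exact this.eventually_lt_const (half_pos hε)
    filter_upwards [e1, e2] with k h1 h2 z hz
    have hzR : ‖z‖ ≤ R := by simpa using hKR hz
    show dist (f.1 z) (f.1 (((1 - s k : ℝ) : ℂ) • z) + (s k : ℂ) * h z) < ε
    have h3 : dist (f.1 z) (f.1 (((1 - s k : ℝ) : ℂ) • z)) < ε / 2 := by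
      apply huc z (hKR hz)
      · rw [mem_closedBall_zero_iff, hscale]
        nlinarith [hs0 k, hs1 k, norm_nonneg z]
      · rw [dist_eq_norm]
        have : z - ((1 - s k : ℝ) : ℂ) • z = (s k : ℂ) • z := by
          push_cast
          rw [sub_smul, one_smul]; abel
        rw [this, norm_smul, Complex.norm_real, Real.norm_of_nonneg (hs0 k).le]
        nlinarith [hs0 k, norm_nonneg z]
    rw [dist_eq_norm] at h3 ⊢
    have h4 : ‖(s k : ℂ) * h z‖ ≤ s k * M := by
      rw [norm_mul, Complex.norm_real, Real.norm_of_nonneg (hs0 k).le]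
      exact mul_le_mul_of_nonneg_left (hM z (hKR hz)) (hs0 k).le
    rw [← sub_sub]
    have := norm_sub_le (f.1 z - f.1 (((1 - s k : ℝ) : ℂ) • z)) ((s k : ℂ) * h z)
    linarith
  · refine mem_iInter.2 fun n => ?_
    -- the dilation of `f` is bounded
    have hlt : 1 - s k < 1 := by linarith [hs0 k]
    obtain ⟨M, hM⟩ := (isCompact_closedBall (0 : EN N) (1 - s k)).exists_bound_of_continuousOn
      (hfd.continuousOn.mono (closedBall_subset_ball hlt))
    obtain ⟨m, hm⟩ := exists_nat_ge (max (n : ℝ) ((n + 1 + M) / s k))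
    have hmn : (n : ℝ) ≤ m := (le_max_left _ _).trans hm
    have hmM : (n + 1 + M) ≤ m * s k := (div_le_iff₀ (hs0 k)).1 ((le_max_right _ _).trans hm)
    obtain ⟨r', hr', hw'⟩ := hw m
    have hle : 1 / ((m : ℝ) + 1) ≤ 1 / ((n : ℝ) + 1) := by gcongr
    refine ⟨r', hr', 1, one_pos, fun ζ b hζ hb hcb => ?_⟩
    obtain ⟨t, ht, h1, h2⟩ := hw' ζ b hζ hb (hle.trans hcb)
    refine ⟨t, ht.trans_le hle, h1, ?_⟩
    show (n : ℝ) + 1 ≤ ‖f.1 (((1 - s k : ℝ) : ℂ) • (ζ + t • b)) + (s k : ℂ) * h (ζ + t • b)‖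
    have h3 : ‖f.1 (((1 - s k : ℝ) : ℂ) • (ζ + t • b))‖ ≤ M := by
      apply hM
      rw [mem_closedBall_zero_iff, hscale]
      nlinarith [hs1 k]
    have h4 : m * s k ≤ ‖(s k : ℂ) * h (ζ + t • b)‖ := by
      rw [norm_mul, Complex.norm_real, Real.norm_of_nonneg (hs0 k).le, mul_comm]
      exact mul_le_mul_of_nonneg_left h2 (hs0 k).le
    have h5 := norm_sub_le (f.1 (((1 - s k : ℝ) : ℂ) • (ζ + t • b)) + (s k : ℂ) * h (ζ + t • b))
      (f.1 (((1 - s k : ℝ) : ℂ) • (ζ + t • b)))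
    rw [add_sub_cancel_left] at h5
    linarith

/-- **Non-extendability along affine lines.** For `N ≥ 2`, the set of `f ∈ 𝒪(𝔹_N)` such
that for every complex affine line `L = {a + t b : t ∈ ℂ}` meeting `𝔹_N`, the restriction
of `f` to `L ∩ 𝔹_N` extends holomorphically past no boundary point of the disc `L ∩ 𝔹_N`,
is residual in `𝒪(𝔹_N)`. -/
theorem nonextendable_slices_residual {N : ℕ} (hN : 2 ≤ N) :
    ResidualIn {f : ↥(Hol (Metric.ball (0:EN N) 1)) |
      ∀ a b : EN N, b ≠ 0 → ({t : ℂ | a + t • b ∈ Metric.ball (0:EN N) 1}).Nonempty →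
        ∀ t₀ : ℂ, a + t₀ • b ∈ Metric.sphere (0:EN N) 1 →
          ¬ ∃ (W : Set ℂ) (g : ℂ → ℂ), IsOpen W ∧ t₀ ∈ W ∧
            DifferentiableOn ℂ g ({t : ℂ | a + t • b ∈ Metric.ball (0:EN N) 1} ∪ W) ∧
            ∃ V : Set ℂ, IsOpen V ∧ t₀ ∈ V ∧
              ∀ t ∈ V ∩ {t : ℂ | a + t • b ∈ Metric.ball (0:EN N) 1},
                g t = f.1 (a + t • b)} := by
  refine ⟨⋂ n, USet N n, ?_, IsGδ.iInter_of_isOpen (isOpen_USet N), dense_iInter_USet N⟩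
  intro f hf a b hb hne t₀ ht₀
  rintro ⟨W, g, hW, htW, hg, V, hV, htV, hfg⟩
  have hbn : 0 < ‖b‖ := norm_pos_iff.2 hb
  have hbn' : (‖b‖ : ℂ) ≠ 0 := by exact_mod_cast hbn.ne'
  set ζ : EN N := a + t₀ • b with hζ
  have hζ1 : ‖ζ‖ = 1 := by simpa using ht₀
  set b' : EN N := (‖b‖ : ℂ)⁻¹ • b with hb'
  have hb'1 : ‖b'‖ = 1 := by
    rw [hb', norm_smul, norm_inv, Complex.norm_real, norm_norm, inv_mul_cancel₀ hbn.ne']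
  have hline : ∀ t : ℂ, ζ + t • b' = a + (t₀ + t * (‖b‖ : ℂ)⁻¹) • b := by
    intro t
    rw [hζ, hb', smul_smul, add_smul, add_assoc]
  have hγ : (⟪b', ζ⟫_ℂ : ℂ) ≠ 0 := by
    intro h0
    obtain ⟨t, ht⟩ := hne
    have ht' : ‖a + t • b‖ < 1 := by simpa using ht
    have h1 : a + t • b = ζ + ((t - t₀) * ‖b‖) • b' := by
      rw [hline, mul_assoc, mul_inv_cancel₀ hbn', mul_one, add_sub_cancel]
    rw [h1] at ht'
    have h2 := @norm_add_sq ℂ (EN N) _ _ _ ζ (((t - t₀) * ‖b‖) • b')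
    have h3 : (⟪ζ, b'⟫_ℂ : ℂ) = 0 := by rw [← inner_conj_symm, h0, map_zero]
    rw [inner_smul_right, h3, hζ1, mul_zero, map_zero] at h2
    nlinarith [norm_nonneg (ζ + ((t - t₀) * ‖b‖) • b'), sq_nonneg ‖((t - t₀) * ‖b‖) • b'‖]
  have hγ0 : 0 < ‖(⟪b', ζ⟫_ℂ : ℂ)‖ := norm_pos_iff.2 hγ
  -- `g` is bounded near `t₀`
  have hgc : ContinuousAt g t₀ :=
    ((hg.mono subset_union_right).differentiableAt (hW.mem_nhds htW)).continuousAt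
  have e1 : ∀ᶠ t in 𝓝 t₀, ‖g t‖ < ‖g t₀‖ + 1 ∧ t ∈ V :=
    (hgc.norm.eventually_lt_const (by linarith)).and (hV.mem_nhds htV)
  obtain ⟨δ, hδ, hball⟩ := Metric.eventually_nhds_iff.1 e1
  have hst : Tendsto (fun k : ℕ => 1 / ((k : ℝ) + 1)) atTop (𝓝 0) :=
    tendsto_one_div_add_atTop_nhds_zero_nat
  have e2 := hst.eventually_le_const hγ0
  have e3 := hst.eventually_lt_const (mul_pos hδ hbn)
  have e4 : ∀ᶠ k : ℕ in atTop, ‖g t₀‖ + 1 ≤ (k : ℝ) :=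
    tendsto_natCast_atTop_atTop.eventually_ge_atTop _
  obtain ⟨n, h2, h3, h4⟩ := (e2.and (e3.and e4)).exists
  obtain ⟨r', hr', δ', hδ', hU⟩ := mem_iInter.1 hf n
  obtain ⟨t, ht, h5, h6⟩ := hU ζ b' hζ1 hb'1 h2
  rw [hline] at h5 h6
  have h7 : dist (t₀ + t * (‖b‖ : ℂ)⁻¹) t₀ < δ := by
    rw [dist_eq_norm, add_sub_cancel_left, norm_mul, norm_inv, Complex.norm_real, norm_norm,
      ← div_eq_mul_inv, div_lt_iff₀ hbn]
    exact ht.trans h3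
  obtain ⟨h8, h9⟩ := hball h7
  have h10 := hfg _ ⟨h9, show a + (t₀ + t * (‖b‖ : ℂ)⁻¹) • b ∈ ball (0 : EN N) 1 by
    simpa using h5.trans_lt hr'⟩
  rw [h10] at h8
  linarith
end
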